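/- arXiv:2503.03423 — 4 statements merged into one kernel-verified Lean document; each statement's English description precedes it below -/
import Mathlib

section
/- Let L be a finite group and let A be a normal subgroup of L of odd order. Then the number of conjugacy classes of L consisting of involutions is equal to the number of conjugacy classes of the quotient group L/A consisting of involutions. -/
theorem aux_conj {G : Type*} [Group G] (x y : G) (hx : x * x = 1) (hy : y * y = 1) (m : ℕ)
    (h : (x * y) ^ (2 * m + 1) = 1) : IsConj x y := by
  rw [isConj_iff]
  refine ⟨(x * y) ^ m, ?_⟩
  rw [mul_inv_eq_iff_eq_mul]
  have hxi : x⁻¹ = x := inv_eq_of_mul_eq_one_left hx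
  have hyi : y⁻¹ = y := inv_eq_of_mul_eq_one_left hy
  have h1 : SemiconjBy x (x * y)⁻¹ (x * y) := by
    unfold SemiconjBy
    simp [hxi, hyi, mul_assoc]
  have h2 : x * ((x * y) ^ m)⁻¹ = (x * y) ^ m * x := by
    have := h1.pow_right m
    rw [inv_pow] at this
    exact this
  have h3 : ((x * y) ^ m)⁻¹ = (x * y) ^ (m + 1) := by
    apply inv_eq_of_mul_eq_one_right
    rw [← pow_add, ← h]
    congr 1
    ring
  rw [← h2, h3, pow_succ', ← mul_assoc, ← mul_assoc, hx, one_mul]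

theorem aux_carrier {G : Type*} [Group G] (x : G) :
    (∀ z ∈ (ConjClasses.mk x).carrier, orderOf z = 2) ↔ orderOf x = 2 := by
  constructor
  · intro h
    exact h x ConjClasses.mem_carrier_mk
  · intro h z hz
    rw [ConjClasses.mem_carrier_iff_mk_eq, ConjClasses.mk_eq_mk_iff_isConj, isConj_iff] at hz
    obtain ⟨c, hc⟩ := hz
    rw [orderOf_eq_prime_iff] at h ⊢
    rw [← hc] at h
    rw [conj_pow] at h
    simpa only [ne_eq, conj_eq_one_iff] using h

/-- Let `L` be a finite group and `A` a normal subgroup of odd order. Then `L` and `L/A`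
have the same number of conjugacy classes consisting of involutions. -/
theorem stmt0 {L : Type*} [Group L] [Finite L] (A : Subgroup L) [A.Normal]
    (hA : Odd (Nat.card A)) :
    Nat.card {c : ConjClasses L // ∀ x ∈ c.carrier, orderOf x = 2} =
      Nat.card {c : ConjClasses (L ⧸ A) // ∀ x ∈ c.carrier, orderOf x = 2} := by
  obtain ⟨m, hm⟩ := hA
  have hpow : ∀ a ∈ A, a ^ (2 * m + 1) = 1 := by
    intro a ha
    have := pow_card_eq_one' (x := (⟨a, ha⟩ : A))
    rw [hm] at this
    simpa using congrArg Subtype.val this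
  have hodd : ∀ x : L, x ^ 2 = 1 → x ^ (2 * m + 1) = x := by
    intro x hx
    rw [pow_succ, pow_mul, hx, one_pow, one_mul]
  have key : ∀ x : L, orderOf x = 2 → orderOf (x : L ⧸ A) = 2 := by
    intro x hx
    rw [orderOf_eq_prime_iff] at hx ⊢
    refine ⟨by rw [← QuotientGroup.mk_pow, hx.1, QuotientGroup.mk_one], fun h => hx.2 ?_⟩
    rw [QuotientGroup.eq_one_iff] at h
    rw [← hodd x hx.1, hpow x h]
  have hmap : ∀ c : ConjClasses L, (∀ x ∈ c.carrier, orderOf x = 2) →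
      ∀ x ∈ (ConjClasses.map (QuotientGroup.mk' A) c).carrier, orderOf x = 2 := by
    intro c
    induction c using Quotient.inductionOn with
    | _ x =>
      intro h
      exact (aux_carrier (x : L ⧸ A)).2 (key x ((aux_carrier x).1 h))
  refine Nat.card_congr (Equiv.ofBijective
    (fun c => ⟨ConjClasses.map (QuotientGroup.mk' A) c.1, hmap c.1 c.2⟩) ⟨?_, ?_⟩)
  · rintro ⟨c, hc⟩ ⟨d, hd⟩ h
    obtain ⟨x, rfl⟩ := ConjClasses.exists_rep c
    obtain ⟨y, rfl⟩ := ConjClasses.exists_rep d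
    have h' : ConjClasses.mk (x : L ⧸ A) = ConjClasses.mk (y : L ⧸ A) := congrArg Subtype.val h
    rw [ConjClasses.mk_eq_mk_iff_isConj, isConj_iff] at h'
    obtain ⟨g, hg⟩ := h'
    obtain ⟨g, rfl⟩ := QuotientGroup.mk_surjective g
    have hx := (orderOf_eq_prime_iff.1 ((aux_carrier x).1 hc)).1
    have hy := (orderOf_eq_prime_iff.1 ((aux_carrier y).1 hd)).1
    apply Subtype.ext
    show ConjClasses.mk x = ConjClasses.mk y
    rw [ConjClasses.mk_eq_mk_iff_isConj]
    have c1 : IsConj x (g * x * g⁻¹) := isConj_iff.2 ⟨g, rfl⟩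
    have hz : (g * x * g⁻¹) * (g * x * g⁻¹) = 1 := by
      rw [← sq, conj_pow, hx]; simp
    refine c1.trans (aux_conj _ _ hz (by rw [← sq, hy]) m (hpow _ ?_))
    rw [← QuotientGroup.eq_one_iff]
    have e : ((g * x * g⁻¹ : L) : L ⧸ A) = y := by simpa using hg
    rw [QuotientGroup.mk_mul, e, ← QuotientGroup.mk_mul, ← sq, hy, QuotientGroup.mk_one]
  · rintro ⟨c, hc⟩
    obtain ⟨x, rfl⟩ := ConjClasses.exists_rep c
    obtain ⟨x, rfl⟩ := QuotientGroup.mk_surjective x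
    have hx := orderOf_eq_prime_iff.1 ((aux_carrier _).1 hc)
    have e : ((x ^ (2 * m + 1) : L) : L ⧸ A) = x := by
      rw [QuotientGroup.mk_pow, pow_succ, pow_mul, hx.1, one_pow, one_mul]
    refine ⟨⟨ConjClasses.mk (x ^ (2 * m + 1)), (aux_carrier _).2 ?_⟩, ?_⟩
    · rw [orderOf_eq_prime_iff]
      constructor
      · rw [← pow_mul, mul_comm, pow_mul]
        apply hpow
        rw [← QuotientGroup.eq_one_iff, QuotientGroup.mk_pow, hx.1]
      · intro h
        apply hx.2
        rw [← e, h, QuotientGroup.mk_one]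
    · apply Subtype.ext
      exact congrArg ConjClasses.mk e
end

section
/- Let L be a finite group and let A be a normal subgroup of L of odd order. If the quotient L/A has a unique conjugacy class of involutions (i.e., L/A contains an element of order 2 and any two elements of order 2 in L/A are conjugate), then L has a unique conjugacy class of involutions. -/
/-- If `A ⊴ L` has odd order and `L/A` has a unique conjugacy class of involutions,
then `L` has a unique conjugacy class of involutions. -/
theorem stmt1 {L : Type*} [Group L] [Finite L] (A : Subgroup L) [A.Normal]
    (hA : Odd (Nat.card A))
    (h₁ : ∃ x : L ⧸ A, orderOf x = 2)
    (h₂ : ∀ x y : L ⧸ A, orderOf x = 2 → orderOf y = 2 → IsConj x y) :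
    (∃ x : L, orderOf x = 2) ∧ ∀ x y : L, orderOf x = 2 → orderOf y = 2 → IsConj x y := by
  constructor
  · obtain ⟨x, hx⟩ := h₁
    haveI : Fact (Nat.Prime 2) := ⟨Nat.prime_two⟩
    apply exists_prime_orderOf_dvd_card' 2
    have h1 : 2 ∣ Nat.card (L ⧸ A) := hx ▸ orderOf_dvd_natCard x
    exact h1.trans (Subgroup.card_quotient_dvd_card A)
  · obtain ⟨k, hk⟩ := hA
    have hpow : ∀ c ∈ A, c ^ (2 * k + 1) = 1 := by
      intro c hc
      have := pow_card_eq_one' (x := (⟨c, hc⟩ : A))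
      rw [hk] at this
      simpa using congrArg Subtype.val this
    have hq : ∀ x : L, orderOf x = 2 → orderOf (x : L ⧸ A) = 2 := by
      intro x hx
      rw [orderOf_eq_prime_iff] at hx ⊢
      refine ⟨by rw [← QuotientGroup.mk_pow, hx.1, QuotientGroup.mk_one], fun h => hx.2 ?_⟩
      have := hpow x ((QuotientGroup.eq_one_iff x).1 h)
      rwa [pow_succ, pow_mul, hx.1, one_pow, one_mul] at this
    intro x y hx hy
    obtain ⟨g', hg⟩ := isConj_iff.1 (h₂ _ _ (hq x hx) (hq y hy))
    obtain ⟨g, rfl⟩ := QuotientGroup.mk_surjective g'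
    have hx2 : x * x = 1 := by rw [← pow_two, ← hx, pow_orderOf_eq_one]
    have hy2 : y * y = 1 := by rw [← pow_two, ← hy, pow_orderOf_eq_one]
    have hxz : IsConj x (g * x * g⁻¹) := isConj_iff.2 ⟨g, rfl⟩
    refine hxz.trans ?_
    have hz2 : (g * x * g⁻¹) * (g * x * g⁻¹) = 1 := by
      have : (g * x * g⁻¹) * (g * x * g⁻¹) = g * (x * x) * g⁻¹ := by group
      rw [this, hx2]; group
    have hgz : ((g * x * g⁻¹ : L) : L ⧸ A) = (y : L ⧸ A) := hg
    generalize g * x * g⁻¹ = z at hz2 hgz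
    have hzi : z⁻¹ = z := inv_eq_of_mul_eq_one_left hz2
    have hyi : y⁻¹ = y := inv_eq_of_mul_eq_one_left hy2
    have hc : z * y ∈ A := by
      have := QuotientGroup.eq.1 hgz
      rwa [hzi] at this
    have hc1 := hpow _ hc
    have hinv : z * (z * y) * z⁻¹ = (z * y)⁻¹ := by
      rw [mul_inv_rev, hyi, hzi, ← mul_assoc, hz2, one_mul]
    have hdd : (z * y) ^ (k + 1) * (z * y) ^ (k + 1) = z * y := by
      rw [← pow_add, show k + 1 + (k + 1) = (2 * k + 1) + 1 by ring, pow_succ, hc1, one_mul]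
    have hd : z * (z * y) ^ (k + 1) * z⁻¹ = ((z * y) ^ (k + 1))⁻¹ := by
      rw [← conj_pow, hinv, inv_pow]
    generalize (z * y) ^ (k + 1) = d at hdd hd
    refine isConj_iff.2 ⟨d⁻¹, ?_⟩
    rw [inv_inv, ← hd, inv_mul_cancel_right, mul_assoc, hdd, ← mul_assoc, hz2, one_mul]
end

section
/- Let L be a finite group, let A be a normal subgroup of L of odd order, and let t, t' ∈ L be elements of order 2 with t⁻¹t' ∈ A (i.e., t and t' lie in the same coset of A). Then t and t' are conjugate in L. -/
/-- If `A ⊴ L` has odd order and `t, t'` are involutions of `L` lying in the same coset of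
`A`, then `t` and `t'` are conjugate in `L`. -/
theorem stmt3 {L : Type*} [Group L] [Finite L] (A : Subgroup L) [A.Normal]
    (hA : Odd (Nat.card A)) (t t' : L)
    (ht : orderOf t = 2) (ht' : orderOf t' = 2) (htt' : t⁻¹ * t' ∈ A) :
    IsConj t t' := by
  obtain ⟨k, hk⟩ := hA
  have h1 : t * t = 1 := by rw [← pow_two, ← ht]; exact pow_orderOf_eq_one t
  have h2 : t' * t' = 1 := by rw [← pow_two, ← ht']; exact pow_orderOf_eq_one t'
  have hi : t⁻¹ = t := inv_eq_of_mul_eq_one_left h1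
  have hi' : t'⁻¹ = t' := inv_eq_of_mul_eq_one_left h2
  obtain ⟨a, ha⟩ : ∃ a, a = t⁻¹ * t' := ⟨_, rfl⟩
  have hta : t' = t * a := by rw [ha]; group
  have hpow : a ^ (2 * k + 1) = 1 := by
    rw [← hk, ha]
    exact congrArg Subtype.val (pow_card_eq_one' (x := (⟨t⁻¹ * t', htt'⟩ : A)))
  have hs : SemiconjBy t a a⁻¹ := by
    change t * a = a⁻¹ * t
    rw [ha, mul_inv_rev, inv_inv, hi', mul_assoc, h1]; group
  have hs2 : t * a ^ (k + 1) = a⁻¹ ^ (k + 1) * t := hs.pow_right (k + 1)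
  have h3 : a⁻¹ ^ (k + 1) = a ^ k := by
    rw [inv_pow]
    apply inv_eq_of_mul_eq_one_left
    rw [← pow_add, ← hpow]; congr 1; ring
  rw [isConj_iff]
  refine ⟨a ^ k, ?_⟩
  rw [mul_inv_eq_iff_eq_mul, ← h3, ← hs2, h3, hta, pow_succ', mul_assoc]
end

section
/- Let T be a finite group acting transitively on a nonempty set Ω, let ω ∈ Ω, and let H be the stabilizer of ω in T. If every element of order 2 in T fixes some point of Ω, then the number of T-conjugacy classes of T consisting of involutions is at most the number of H-conjugacy classes of H consisting of involutions. -/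
theorem stmt8 {T Ω : Type*} [Group T] [Finite T] [Nonempty Ω]
    [MulAction T Ω] [MulAction.IsPretransitive T Ω] (ω : Ω)
    (hfix : ∀ x : T, orderOf x = 2 → ∃ α : Ω, x • α = α) :
    Nat.card {c : ConjClasses T // ∀ x ∈ c.carrier, orderOf x = 2} ≤
      Nat.card {c : ConjClasses (MulAction.stabilizer T ω) //
        ∀ x ∈ c.carrier, orderOf x = 2} := by
  have key : ∀ c : {c : ConjClasses T // ∀ x ∈ c.carrier, orderOf x = 2},
      ∃ h : MulAction.stabilizer T ω, orderOf h = 2 ∧ ConjClasses.mk (h : T) = c.1 := by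
    rintro ⟨c, hc⟩
    obtain ⟨x, rfl⟩ := ConjClasses.exists_rep c
    obtain ⟨α, hα⟩ := hfix x (hc x ConjClasses.mem_carrier_mk)
    obtain ⟨g, rfl⟩ := MulAction.exists_smul_eq T ω α
    have hconj : IsConj x (g⁻¹ * x * g) := isConj_iff.2 ⟨g⁻¹, by simp⟩
    have hmk : ConjClasses.mk (g⁻¹ * x * g) = ConjClasses.mk x :=
      (ConjClasses.mk_eq_mk_iff_isConj.2 hconj).symm
    refine ⟨⟨g⁻¹ * x * g, ?_⟩, ?_, hmk⟩
    · rw [MulAction.mem_stabilizer_iff, mul_smul, mul_smul, hα, inv_smul_smul]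
    · rw [← Subgroup.orderOf_coe]
      exact hc _ (ConjClasses.mem_carrier_iff_mk_eq.2 hmk)
  choose f hf hfc using key
  haveI : Finite (ConjClasses (MulAction.stabilizer T ω)) := Quotient.finite _
  refine Nat.card_le_card_of_injective (fun c => ⟨ConjClasses.mk (f c), ?_⟩) ?_
  · intro y hy
    obtain ⟨k, hk⟩ := isConj_iff.1
      (ConjClasses.mk_eq_mk_iff_isConj.1 (ConjClasses.mem_carrier_iff_mk_eq.1 hy))
    have h2 := hf c
    rw [← hk] at h2
    rw [← h2]
    exact (orderOf_injective (MulAut.conj k).toMonoidHom (MulAut.conj k).injective y).symm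
  · intro c d hcd
    have h := ConjClasses.mk_eq_mk_iff_isConj.1 (congrArg Subtype.val hcd)
    apply Subtype.ext
    rw [← hfc c, ← hfc d]
    exact ConjClasses.mk_eq_mk_iff_isConj.2
      ((MulAction.stabilizer T ω).subtype.map_isConj h)
end
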